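/- The ordinary generating function F(t) = Σ_n |I_n(010,102)| t^n of inversion sequences avoiding 010 and 102 is algebraic and satisfies the cubic equation (t⁵ − 3t⁴ + 4t³ − 3t² + t)F³ + (4t⁴ − 8t³ + 6t² − 2t)F² + (−t⁴ + 8t³ − 11t² + 6t − 1)F − 2t³ + 5t² − 4t + 1 = 0. -/

import Mathlib

def Contains010 {n : ℕ} (σ : Fin n → ℕ) : Prop :=
  ∃ i j k : Fin n, i < j ∧ j < k ∧ σ i = σ k ∧ σ k < σ j

def Contains102 {n : ℕ} (σ : Fin n → ℕ) : Prop :=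
  ∃ i j k : Fin n, i < j ∧ j < k ∧ σ j < σ i ∧ σ i < σ k

/-!
A word is an inversion sequence when its `i`-th letter is below `1 + i`; bounding it by
`h + s * i` instead treats arbitrary words over `{0, …, h - 1}` (`s = 0`) and inversion sequences
(`s = 1`) at once. In a word `a :: w` avoiding 010 and 102, either no letter of `w` exceeds `a`,
or `w = u ++ v` with the letters of `u` at least `a` and those of `v` below `a`. Here `v` is an
arbitrary avoiding word, and after subtracting `a` from its letters, `u` either starts with `0` or
has only positive letters. Marking `h` by a second variable `x`, these decompositions give an
equation for the words over `{0, …, h - 1}`, and one for the inversion sequences which is linear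
with kernel `x - t - t x B`, where `B` is the series of the former. Evaluation at the root of the
kernel, a power series in `t` by Weierstrass preparation, leaves a system whose elimination is the
cubic.
-/

open PowerSeries
open Finset.HasAntidiagonal (antidiagonal mem_antidiagonal)

section LengthGF

variable {α β : Type*}

/-- The words of length `n` in a language. -/
def wordsOfLength (L : Language α) (n : ℕ) : Set (List α) :=
  {w | w ∈ L ∧ w.length = n}

/-- A language with finitely many words of each length, so that counting its words by length
does not involve the junk value of `Set.ncard` at infinite sets. -/
def FinitePerLength (L : Language α) : Prop :=
  ∀ n, (wordsOfLength L n).Finite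

/-- The ordinary generating function of a language, counting its words by length. -/
noncomputable def lengthGF (L : Language α) : ℚ⟦X⟧ :=
  PowerSeries.mk fun n ↦ ((wordsOfLength L n).ncard : ℚ)

/-- Each word of `L * M` is a concatenation of words of `L` and of `M` in only one way, so that
`lengthGF` is multiplicative on `L * M`. -/
def IsUnambiguousMul (L M : Language α) : Prop :=
  Set.InjOn (fun p : List α × List α ↦ p.1 ++ p.2) {p | p.1 ∈ L ∧ p.2 ∈ M}

lemma FinitePerLength.mono {L M : Language α} (hM : FinitePerLength M) (h : L ≤ M) :
    FinitePerLength L :=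
  fun n ↦ (hM n).subset fun _ hw ↦ ⟨h hw.1, hw.2⟩

lemma finitePerLength_singleton (w : List α) : FinitePerLength ({w} : Language α) :=
  fun _ ↦ (Set.finite_singleton w).subset fun _ hv ↦ hv.1

lemma lengthGF_singleton (w : List α) : lengthGF ({w} : Language α) = X ^ w.length := by
  ext n
  rw [lengthGF, coeff_mk, coeff_X_pow]
  split_ifs with h
  · have : wordsOfLength {w} n = {w} :=
      Set.ext fun v ↦ ⟨And.left, fun hv ↦ ⟨hv, by rw [Set.mem_singleton_iff.1 hv, h]⟩⟩
    rw [this, Set.ncard_singleton, Nat.cast_one]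
  · have : wordsOfLength {w} n = ∅ := by
      refine Set.eq_empty_of_forall_notMem fun v hv ↦ h ?_
      rw [← hv.2, Set.mem_singleton_iff.1 hv.1]
    rw [this, Set.ncard_empty, Nat.cast_zero]

lemma lengthGF_one : lengthGF (1 : Language α) = 1 :=
  lengthGF_singleton []

lemma lengthGF_add {L M : Language α} (hfin : FinitePerLength (L + M))
    (hdisj : ∀ w ∈ L, w ∉ M) : lengthGF (L + M) = lengthGF L + lengthGF M := by
  ext n
  have hunion : wordsOfLength (L + M) n = wordsOfLength L n ∪ wordsOfLength M n :=
    Set.ext fun w ↦ or_and_right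
  have hdisj' : Disjoint (wordsOfLength L n) (wordsOfLength M n) :=
    Set.disjoint_left.2 fun w hL hM ↦ hdisj w hL.1 hM.1
  simp only [lengthGF, coeff_mk, map_add]
  rw [hunion, Set.ncard_union_eq hdisj' ((hfin.mono le_self_add) n) ((hfin.mono le_add_self) n),
    Nat.cast_add]

lemma mem_language_sum {ι : Type*} {I : Finset ι} {L : ι → Language α} {w : List α} :
    w ∈ ∑ i ∈ I, L i ↔ ∃ i ∈ I, w ∈ L i := by
  induction I using Finset.cons_induction with
  | empty => simp
  | cons i I hi ih => simp [Language.mem_add, ih]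

lemma lengthGF_sum {ι : Type*} {I : Finset ι} {L : ι → Language α}
    (hfin : FinitePerLength (∑ i ∈ I, L i))
    (hdisj : ∀ i ∈ I, ∀ j ∈ I, ∀ w, w ∈ L i → w ∈ L j → i = j) :
    lengthGF (∑ i ∈ I, L i) = ∑ i ∈ I, lengthGF (L i) := by
  induction I using Finset.cons_induction with
  | empty => ext n; simp [lengthGF, wordsOfLength]
  | cons i I hi ih =>
    rw [Finset.sum_cons] at hfin ⊢
    rw [Finset.sum_cons, lengthGF_add hfin, ih (hfin.mono le_add_self) fun j hj k hk ↦
      hdisj j (Finset.mem_cons_of_mem hj) k (Finset.mem_cons_of_mem hk)]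
    intro w hw hw'
    obtain ⟨j, hj, hwj⟩ := mem_language_sum.1 hw'
    have : i = j := hdisj i (Finset.mem_cons_self i I) j (Finset.mem_cons_of_mem hj) w hw hwj
    exact hi (this ▸ hj)

lemma lengthGF_sub {L M : Language α} (hL : FinitePerLength L) (hML : M ≤ L) :
    lengthGF (L - M) = lengthGF L - lengthGF M := by
  have hadd : M + (L - M) = L := Set.union_sdiff_cancel hML
  have hsum := lengthGF_add (L := M) (M := L - M) (by rwa [hadd]) fun _ hM hw ↦ hw.2 hM
  rw [hadd] at hsum
  rw [hsum, add_sub_cancel_left]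

lemma wordsOfLength_map (f : α → β) (L : Language α) (n : ℕ) :
    wordsOfLength (Language.map f L) n = List.map f '' wordsOfLength L n := by
  ext w
  constructor
  · rintro ⟨⟨v, hv, rfl⟩, hlen⟩
    exact ⟨v, ⟨hv, by rwa [List.length_map] at hlen⟩, rfl⟩
  · rintro ⟨v, ⟨hv, hlen⟩, rfl⟩
    exact ⟨⟨v, hv, rfl⟩, by rwa [List.length_map]⟩

lemma FinitePerLength.map {L : Language α} (hL : FinitePerLength L) (f : α → β) :
    FinitePerLength (Language.map f L) := fun n ↦ by
  rw [wordsOfLength_map]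
  exact (hL n).image _

lemma lengthGF_map {f : α → β} (hf : f.Injective) (L : Language α) :
    lengthGF (Language.map f L) = lengthGF L := by
  simp only [lengthGF, wordsOfLength_map, Set.ncard_image_of_injective _ hf.list_map]

lemma wordsOfLength_mul (L M : Language α) (n : ℕ) :
    wordsOfLength (L * M) n = (fun p : List α × List α ↦ p.1 ++ p.2) ''
      ⋃ ij ∈ antidiagonal n, wordsOfLength L ij.1 ×ˢ wordsOfLength M ij.2 := by
  ext w
  simp only [Set.mem_image, Set.mem_iUnion₂, mem_antidiagonal]
  constructor
  · rintro ⟨⟨u, hu, v, hv, rfl⟩, hlen⟩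
    exact ⟨(u, v), ⟨(u.length, v.length), by rwa [← List.length_append], ⟨hu, rfl⟩, hv, rfl⟩, rfl⟩
  · rintro ⟨⟨u, v⟩, ⟨⟨i, j⟩, hij, ⟨hu, rfl⟩, hv, rfl⟩, rfl⟩
    exact ⟨Language.append_mem_mul hu hv, by rwa [List.length_append]⟩

lemma lengthGF_mul {L M : Language α} (hL : FinitePerLength L) (hM : FinitePerLength M)
    (h : IsUnambiguousMul L M) : lengthGF (L * M) = lengthGF L * lengthGF M := by
  ext n
  have hinj : Set.InjOn (fun p : List α × List α ↦ p.1 ++ p.2)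
      (⋃ ij ∈ antidiagonal n, wordsOfLength L ij.1 ×ˢ wordsOfLength M ij.2) := by
    refine h.mono fun p hp ↦ ?_
    obtain ⟨_, _, hp₁, hp₂⟩ := Set.mem_iUnion₂.1 hp
    exact ⟨hp₁.1, hp₂.1⟩
  have hdisj : (↑(antidiagonal n) : Set (ℕ × ℕ)).PairwiseDisjoint
      fun ij ↦ wordsOfLength L ij.1 ×ˢ wordsOfLength M ij.2 := by
    rintro ⟨i, j⟩ - ⟨i', j'⟩ - hne
    exact Set.disjoint_left.2 fun p hp hp' ↦
      hne (Prod.ext (hp.1.2.symm.trans hp'.1.2) (hp.2.2.symm.trans hp'.2.2))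
  have hncard := (Finset.finite_toSet (antidiagonal n)).ncard_biUnion
    (fun ij _ ↦ (hL ij.1).prod (hM ij.2)) hdisj
  simp only [Finset.mem_coe] at hncard
  rw [coeff_mul, lengthGF, coeff_mk, wordsOfLength_mul, hinj.ncard_image, hncard,
    finsum_mem_finset_eq_sum, Nat.cast_sum]
  simp only [lengthGF, coeff_mk, Set.ncard_prod, Nat.cast_mul]

lemma isUnambiguousMul_singleton (w : List α) (M : Language α) : IsUnambiguousMul {w} M := by
  rintro ⟨u, v⟩ ⟨rfl, -⟩ ⟨u', v'⟩ ⟨rfl, -⟩ h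
  exact Prod.ext rfl (List.append_cancel_left h)

lemma isUnambiguousMul_of_forall (p : α → Prop) {L M : Language α} (hL : ∀ w ∈ L, ∀ x ∈ w, p x)
    (hM : ∀ w ∈ M, ∀ x ∈ w, ¬ p x) : IsUnambiguousMul L M := by
  classical
  have filter_append {u v : List α} (hu : u ∈ L) (hv : v ∈ M) : (u ++ v).filter p = u := by
    rw [List.filter_append, List.filter_eq_self.2 (by simpa using hL u hu),
      List.filter_eq_nil_iff.2 (by simpa using hM v hv), List.append_nil]
  rintro ⟨u, v⟩ ⟨hu : u ∈ L, hv : v ∈ M⟩ ⟨u', v'⟩ ⟨hu' : u' ∈ L, hv' : v' ∈ M⟩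
    (h : u ++ v = u' ++ v')
  obtain rfl : u = u' := by
    rw [← filter_append hu hv, h, filter_append hu' hv']
  rw [List.append_cancel_left h]

lemma lengthGF_singleton_mul {a : α} {L : Language α} (hL : FinitePerLength L) :
    lengthGF ({[a]} * L) = X * lengthGF L := by
  rw [lengthGF_mul (finitePerLength_singleton [a]) hL (isUnambiguousMul_singleton [a] L),
    lengthGF_singleton, List.length_singleton, pow_one]

lemma mem_language_singleton_mul {v w : List α} {L : Language α} :
    v ∈ {w} * L ↔ ∃ u ∈ L, w ++ u = v := by
  rw [Language.mem_mul]
  exact ⟨fun ⟨_, rfl, h⟩ ↦ h, fun h ↦ ⟨w, rfl, h⟩⟩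

end LengthGF

section GrowthBounded

/-- The `i`-th letter of `w` is below `h + s * i`. Slope `s = 0` gives the words over
`{0, …, h - 1}`, while `s = h = 1` gives the inversion sequences. -/
def GrowthBounded (s h : ℕ) (w : List ℕ) : Prop :=
  ∀ (i : ℕ) (hi : i < w.length), w[i] < h + s * i

variable {s h : ℕ} {u v w : List ℕ}

lemma growthBounded_nil : GrowthBounded s h [] :=
  fun i hi ↦ absurd hi i.not_lt_zero

lemma growthBounded_cons {a : ℕ} :
    GrowthBounded s h (a :: w) ↔ a < h ∧ GrowthBounded s (h + s) w := by
  have slope_succ (i : ℕ) : h + s * (i + 1) = h + s + s * i := by ring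
  constructor
  · refine fun haw ↦ ⟨haw 0 (Nat.zero_lt_succ _), fun i hi ↦ ?_⟩
    rw [← slope_succ]
    exact haw (i + 1) (Nat.succ_lt_succ hi)
  · rintro ⟨ha, hw⟩ (_ | i) hi
    · exact ha
    · rw [slope_succ]
      exact hw i (Nat.lt_of_succ_lt_succ hi)

lemma growthBounded_append :
    GrowthBounded s h (u ++ v) ↔ GrowthBounded s h u ∧ GrowthBounded s (h + s * u.length) v := by
  induction u generalizing h with
  | nil => simp [growthBounded_nil]
  | cons a u ih =>
    rw [List.cons_append, growthBounded_cons, growthBounded_cons, ih, and_assoc, List.length_cons,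
      mul_add_one, add_comm (s * u.length), ← add_assoc]

lemma growthBounded_map_add {a : ℕ} :
    GrowthBounded s (h + a) (w.map (· + a)) ↔ GrowthBounded s h w := by
  simp only [GrowthBounded, List.length_map, List.getElem_map, add_right_comm h a,
    Nat.add_lt_add_iff_right]

lemma growthBounded_zero : GrowthBounded 0 h w ↔ ∀ x ∈ w, x < h := by
  simp only [GrowthBounded, zero_mul, add_zero, List.forall_mem_iff_getElem]

lemma GrowthBounded.of_forall_lt (hw : ∀ x ∈ w, x < h) : GrowthBounded s h w :=
  fun _ hi ↦ Nat.lt_add_right _ (hw _ (List.getElem_mem hi))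

lemma growthBounded_ofFn {n : ℕ} {σ : Fin n → ℕ} :
    GrowthBounded s h (List.ofFn σ) ↔ ∀ i, σ i < h + s * i := by
  simp only [GrowthBounded, List.length_ofFn, List.getElem_ofFn, Fin.forall_iff]

lemma finitePerLength_growthBounded (s h : ℕ) : FinitePerLength {w | GrowthBounded s h w} := by
  intro n
  induction n generalizing h with
  | zero => exact (Set.finite_singleton []).subset fun w hw ↦ List.eq_nil_of_length_eq_zero hw.2
  | succ n ih =>
    refine (((Set.finite_Iio h).image2 List.cons (ih (h + s)))).subset ?_
    rintro (_ | ⟨a, w⟩) ⟨hw, hlen⟩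
    · cases hlen
    · obtain ⟨ha, hw⟩ := growthBounded_cons.1 hw
      exact ⟨a, ha, w, ⟨hw, Nat.succ_injective hlen⟩, rfl⟩

end GrowthBounded

section Avoidance

/-- The letters `a`, `b`, `c`, read in this order, form neither of the patterns 010 and 102. -/
def IsAdmissible (a b c : ℕ) : Prop :=
  ¬ (a = c ∧ c < b) ∧ ¬ (b < a ∧ a < c)

variable {a : ℕ} {u v w : List ℕ}

lemma triplewise_isAdmissible_ofFn {n : ℕ} {σ : Fin n → ℕ} :
    (List.ofFn σ).Triplewise IsAdmissible ↔ ¬ Contains010 σ ∧ ¬ Contains102 σ := by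
  simp only [List.triplewise_iff_getElem, List.getElem_ofFn, List.length_ofFn, IsAdmissible]
  constructor
  · refine fun hσ ↦ ⟨?_, ?_⟩
    · rintro ⟨i, j, k, hij, hjk, hσijk⟩
      exact (hσ i j k hij hjk k.isLt).1 hσijk
    · rintro ⟨i, j, k, hij, hjk, hσijk⟩
      exact (hσ i j k hij hjk k.isLt).2 hσijk
  · rintro ⟨h010, h102⟩ i j k hij hjk hk
    exact ⟨fun hσ ↦ h010 ⟨⟨i, _⟩, ⟨j, _⟩, ⟨k, hk⟩, hij, hjk, hσ⟩,
      fun hσ ↦ h102 ⟨⟨i, _⟩, ⟨j, _⟩, ⟨k, hk⟩, hij, hjk, hσ⟩⟩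

lemma isAdmissible_add {b c d : ℕ} :
    IsAdmissible (b + a) (c + a) (d + a) ↔ IsAdmissible b c d := by
  simp only [IsAdmissible, add_left_inj, Nat.add_lt_add_iff_right]

lemma triplewise_isAdmissible_map_add :
    (w.map (· + a)).Triplewise IsAdmissible ↔ w.Triplewise IsAdmissible := by
  simp only [List.triplewise_map, isAdmissible_add]

lemma triplewise_isAdmissible_append (hu : ∀ x ∈ u, a ≤ x) (hv : ∀ x ∈ v, x < a) :
    (u ++ v).Triplewise IsAdmissible ↔
      u.Triplewise IsAdmissible ∧ v.Triplewise IsAdmissible := by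
  have isAdmissible {x y z : ℕ} (hx : x ∈ u) (hz : z ∈ v) : IsAdmissible x y z := by
    have hzx := (hv z hz).trans_le (hu x hx)
    exact ⟨fun h ↦ hzx.ne' h.1, fun h ↦ hzx.asymm h.2⟩
  rw [List.triplewise_append]
  refine ⟨fun h ↦ ⟨h.1, h.2.1⟩, fun h ↦ ⟨h.1, h.2, fun x hx ↦ ?_, fun z hz ↦ ?_⟩⟩
  · exact List.pairwise_of_forall_mem_list fun y _ z hz ↦ isAdmissible hx hz
  · exact List.pairwise_of_forall_mem_list fun x hx y _ ↦ isAdmissible hx hz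

lemma triplewise_isAdmissible_cons_of_le (hw : ∀ x ∈ w, x ≤ a) :
    (a :: w).Triplewise IsAdmissible ↔ w.Triplewise IsAdmissible := by
  rw [List.triplewise_cons, and_iff_right]
  refine List.pairwise_of_forall_mem_list fun b hb c hc ↦ ?_
  exact ⟨fun h ↦ (hw b hb).not_gt (h.1.trans_lt h.2), fun h ↦ (hw c hc).not_gt h.2⟩

lemma triplewise_isAdmissible_cons_of_lt (hw : ∀ x ∈ w, a < x) :
    (a :: w).Triplewise IsAdmissible ↔ w.Triplewise IsAdmissible := by
  rw [List.triplewise_cons, and_iff_right]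
  refine List.pairwise_of_forall_mem_list fun b hb c hc ↦ ?_
  exact ⟨fun h ↦ (hw c hc).ne h.1, fun h ↦ (hw b hb).asymm h.1⟩

end Avoidance

section Decomposition

/-- The words avoiding 010 and 102 whose `i`-th letter is below `h + s * i`. -/
def avoidingWords (s h : ℕ) : Language ℕ :=
  {w | w.Triplewise IsAdmissible ∧ GrowthBounded s h w}

/-- The words `w` such that `a :: w` avoids 010 and 102 and the `i`-th letter of `w`, not of
`a :: w`, is below `h + s * i`. -/
def avoidingTails (s h a : ℕ) : Language ℕ :=
  {w | (a :: w).Triplewise IsAdmissible ∧ GrowthBounded s h w}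

/-- The tails following a letter `a` in which some letter exceeds `a`. -/
def risingTails (s h a : ℕ) : Language ℕ :=
  {w | w ∈ avoidingTails s h a ∧ ∃ b ∈ w, a < b}

variable {s h k a : ℕ} {w : List ℕ}

lemma mem_avoidingWords :
    w ∈ avoidingWords s h ↔ w.Triplewise IsAdmissible ∧ GrowthBounded s h w :=
  Iff.rfl

lemma mem_avoidingTails :
    w ∈ avoidingTails s h a ↔ (a :: w).Triplewise IsAdmissible ∧ GrowthBounded s h w :=
  Iff.rfl

lemma mem_risingTails : w ∈ risingTails s h a ↔
    ((a :: w).Triplewise IsAdmissible ∧ GrowthBounded s h w) ∧ ∃ b ∈ w, a < b :=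
  Iff.rfl

lemma finitePerLength_avoidingWords (s h : ℕ) : FinitePerLength (avoidingWords s h) :=
  (finitePerLength_growthBounded s h).mono fun _ hw ↦ hw.2

lemma finitePerLength_avoidingTails (s h a : ℕ) : FinitePerLength (avoidingTails s h a) :=
  (finitePerLength_growthBounded s h).mono fun _ hw ↦ hw.2

lemma finitePerLength_risingTails (s h a : ℕ) : FinitePerLength (risingTails s h a) :=
  (finitePerLength_avoidingTails s h a).mono fun _ hw ↦ hw.1

lemma nil_mem_avoidingWords : [] ∈ avoidingWords s h :=
  ⟨.nil, growthBounded_nil⟩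

lemma cons_mem_avoidingWords :
    a :: w ∈ avoidingWords s h ↔ a < h ∧ w ∈ avoidingTails s (h + s) a := by
  rw [mem_avoidingWords, mem_avoidingTails, growthBounded_cons, and_left_comm]

lemma avoidingWords_eq_one_add (s h : ℕ) : avoidingWords s h =
    1 + ∑ a ∈ Finset.range h, {[a]} * avoidingTails s (h + s) a := by
  ext w
  simp only [Language.mem_add, Language.mem_one, mem_language_sum, mem_language_singleton_mul,
    Finset.mem_range]
  rcases w with - | ⟨a, w⟩
  · simp [nil_mem_avoidingWords]
  · simp [cons_mem_avoidingWords]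

lemma avoidingWords_zero_right (s : ℕ) : avoidingWords s 0 = 1 := by
  simp [avoidingWords_eq_one_add]

lemma avoidingTails_eq_add_risingTails (hah : a < h) :
    avoidingTails s h a = avoidingWords 0 (a + 1) + risingTails s h a := by
  ext w
  rw [Language.mem_add]
  constructor
  · intro hw
    by_cases hrise : ∃ b ∈ w, a < b
    · exact .inr ⟨hw, hrise⟩
    · push Not at hrise
      exact .inl ⟨(triplewise_isAdmissible_cons_of_le hrise).1 hw.1,
        growthBounded_zero.2 fun x hx ↦ Nat.lt_succ_of_le (hrise x hx)⟩
  · rintro (hw | hw)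
    · have hle (x) (hx : x ∈ w) : x ≤ a := Nat.le_of_lt_succ (growthBounded_zero.1 hw.2 x hx)
      exact ⟨(triplewise_isAdmissible_cons_of_le hle).2 hw.1,
        .of_forall_lt fun x hx ↦ (hle x hx).trans_lt hah⟩
    · exact hw.1

lemma map_add_mem_risingTails :
    w.map (· + a) ∈ risingTails s (k + a) a ↔ w ∈ risingTails s k 0 := by
  have hcons : a :: w.map (· + a) = (0 :: w).map (· + a) := by rw [List.map_cons, zero_add]
  simp only [mem_risingTails, growthBounded_map_add, hcons,
    triplewise_isAdmissible_map_add, List.mem_map, exists_exists_and_eq_and,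
    Nat.lt_add_left_iff_pos]

lemma append_mem_risingTails {u v : List ℕ} (hu : ∀ x ∈ u, a ≤ x) (hv : ∀ x ∈ v, x < a) :
    u ++ v ∈ risingTails s (k + a) a ↔ u ∈ risingTails s (k + a) a ∧ v ∈ avoidingWords 0 a := by
  have hau : ∀ x ∈ a :: u, a ≤ x := List.forall_mem_cons.2 ⟨le_rfl, hu⟩
  have hrise : (∃ b ∈ u ++ v, a < b) ↔ ∃ b ∈ u, a < b := by
    simp only [List.mem_append, or_and_right, exists_or]
    exact or_iff_left fun ⟨b, hb, hab⟩ ↦ (hv b hb).asymm hab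
  have hbound : GrowthBounded s (k + a + s * u.length) v :=
    .of_forall_lt fun x hx ↦ (hv x hx).trans_le (by lia)
  rw [mem_risingTails, mem_risingTails, mem_avoidingWords, ← List.cons_append,
    triplewise_isAdmissible_append hau hv, growthBounded_append, hrise, and_iff_left hbound,
    growthBounded_zero, and_iff_left hv]
  tauto

/-- Once `a` has been followed by a larger letter, a letter below `a` can be followed neither by a
letter above `a` (pattern 102) nor by `a` itself (pattern 010). -/
lemma exists_eq_append_of_mem_risingTails (hw : w ∈ risingTails s h a) :
    ∃ u v, w = u ++ v ∧ (∀ x ∈ u, a ≤ x) ∧ ∀ x ∈ v, x < a := by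
  have hu : ∀ x ∈ w.takeWhile (a ≤ ·), a ≤ x := fun x hx ↦ by
    simpa using List.mem_takeWhile_imp hx
  refine ⟨_, w.dropWhile (a ≤ ·), List.takeWhile_append_dropWhile.symm, hu, ?_⟩
  rcases hdrop : w.dropWhile (a ≤ ·) with - | ⟨b, v⟩
  · simp
  have hba : b < a := by
    have hne : w.dropWhile (a ≤ ·) ≠ [] := hdrop ▸ List.cons_ne_nil b v
    simpa [hdrop] using List.head_dropWhile_not (a ≤ ·) hne
  obtain ⟨⟨havoid, -⟩, c, hc, hac⟩ := hw
  rw [← List.takeWhile_append_dropWhile (p := (a ≤ ·)) (l := w), hdrop] at havoid hc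
  obtain ⟨-, hpair, hpair'⟩ := List.pairwise_append.1 (List.triplewise_cons.1 havoid).1
  have hle : ∀ x ∈ v, x ≤ a := fun x hx ↦
    not_lt.1 fun hax ↦ (List.rel_of_pairwise_cons hpair hx).2 ⟨hba, hax⟩
  have hcu : c ∈ w.takeWhile (a ≤ ·) := by
    refine (List.mem_append.1 hc).resolve_right fun hcv ↦ ?_
    rcases List.mem_cons.1 hcv with rfl | hcv
    · exact hba.asymm hac
    · exact (hle c hcv).not_gt hac
  refine List.forall_mem_cons.2 ⟨hba, fun x hx ↦ (hle x hx).lt_of_ne ?_⟩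
  rintro rfl
  exact (hpair' c hcu x (List.mem_cons_of_mem b hx)).1 ⟨rfl, hac⟩

lemma exists_map_add_eq (hw : ∀ x ∈ w, a ≤ x) : ∃ u : List ℕ, u.map (· + a) = w := by
  change w ∈ Set.range (List.map (· + a))
  rw [Set.range_list_map]
  exact fun x hx ↦ ⟨x - a, Nat.sub_add_cancel (hw x hx)⟩

lemma risingTails_eq_map_mul (s k a : ℕ) : risingTails s (k + a) a =
    Language.map (· + a) (risingTails s k 0) * avoidingWords 0 a := by
  ext w
  rw [Language.mem_mul]
  constructor
  · intro hw
    obtain ⟨u, v, rfl, hu, hv⟩ := exists_eq_append_of_mem_risingTails hw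
    obtain ⟨hu', hv'⟩ := (append_mem_risingTails hu hv).1 hw
    obtain ⟨u, rfl⟩ := exists_map_add_eq hu
    exact ⟨_, ⟨u, map_add_mem_risingTails.1 hu', rfl⟩, v, hv', rfl⟩
  · rintro ⟨_, ⟨u, hu, rfl⟩, v, hv, rfl⟩
    have hle : ∀ x ∈ u.map (· + a), a ≤ x := by simp
    exact (append_mem_risingTails hle (growthBounded_zero.1 hv.2)).2
      ⟨map_add_mem_risingTails.2 hu, hv⟩

lemma isUnambiguousMul_map_add (s k a : ℕ) :
    IsUnambiguousMul (Language.map (· + a) (risingTails s k 0)) (avoidingWords 0 a) := by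
  refine isUnambiguousMul_of_forall (a ≤ ·) ?_
    fun v hv x hx ↦ (growthBounded_zero.1 hv.2 x hx).not_ge
  rintro _ ⟨u, -, rfl⟩
  simp

lemma zero_cons_mem_risingTails :
    0 :: w ∈ risingTails s (k + 1) 0 ↔ w ∈ risingTails s (k + 1 + s) 0 := by
  have havoid : (0 :: 0 :: w).Triplewise IsAdmissible ↔ (0 :: w).Triplewise IsAdmissible := by
    rw [List.triplewise_cons, List.pairwise_cons]
    refine ⟨And.right, fun h ↦ ⟨⟨?_, (List.triplewise_cons.1 h).1⟩, h⟩⟩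
    exact fun x _ ↦ ⟨fun h ↦ h.1.not_gt h.2, fun h ↦ h.1.false⟩
  simp only [mem_risingTails, havoid, growthBounded_cons, k.succ_pos, true_and,
    List.exists_mem_cons_iff, lt_irrefl, false_or]

lemma map_succ_mem_risingTails :
    w.map (· + 1) ∈ risingTails s (k + 1) 0 ↔ w ∈ avoidingWords s k ∧ w ≠ [] := by
  have hpos : ∀ x ∈ w.map (· + 1), 0 < x := by simp
  have hrise : (∃ b ∈ w.map (· + 1), 0 < b) ↔ w ≠ [] := by
    cases w <;> simp
  rw [mem_risingTails, mem_avoidingWords, triplewise_isAdmissible_cons_of_lt hpos,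
    triplewise_isAdmissible_map_add, growthBounded_map_add, hrise]

lemma pos_of_succ_cons_mem_risingTails (hw : (a + 1) :: w ∈ risingTails s h 0) :
    ∀ x ∈ (a + 1) :: w, 0 < x := by
  refine List.forall_mem_cons.2 ⟨a.succ_pos, fun x hx ↦ Nat.pos_of_ne_zero ?_⟩
  rintro rfl
  exact (List.rel_of_pairwise_cons (List.triplewise_cons.1 hw.1.1).1 hx).1 ⟨rfl, a.succ_pos⟩

lemma risingTails_zero_eq_add (s k : ℕ) : risingTails s (k + 1) 0 =
    {[0]} * risingTails s (k + 1 + s) 0 + Language.map (· + 1) (avoidingWords s k - 1) := by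
  ext w
  rw [Language.mem_add, mem_language_singleton_mul]
  constructor
  · intro hw
    rcases w with - | ⟨_ | a, w⟩
    · exact absurd hw.2 (by simp)
    · exact .inl ⟨w, zero_cons_mem_risingTails.1 hw, rfl⟩
    · obtain ⟨v, hv⟩ := exists_map_add_eq (pos_of_succ_cons_mem_risingTails hw)
      rw [← hv] at hw
      exact .inr ⟨v, map_succ_mem_risingTails.1 hw, hv⟩
  · rintro (⟨w, hw, rfl⟩ | ⟨v, hv, rfl⟩)
    · exact zero_cons_mem_risingTails.2 hw
    · exact map_succ_mem_risingTails.2 hv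

end Decomposition

section Recurrences

lemma lengthGF_avoidingWords_zero (s : ℕ) : lengthGF (avoidingWords s 0) = 1 := by
  rw [avoidingWords_zero_right, lengthGF_one]

lemma lengthGF_avoidingWords (s h : ℕ) : lengthGF (avoidingWords s h) =
    1 + X * ∑ a ∈ Finset.range h, lengthGF (avoidingTails s (h + s) a) := by
  have hfin := finitePerLength_avoidingWords s h
  rw [avoidingWords_eq_one_add] at hfin ⊢
  rw [lengthGF_add hfin, lengthGF_one, lengthGF_sum (hfin.mono le_add_self), Finset.mul_sum]
  · simp only [lengthGF_singleton_mul (finitePerLength_avoidingTails _ _ _)]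
  · intro a _ b _ w hwa hwb
    obtain ⟨u, -, rfl⟩ := mem_language_singleton_mul.1 hwa
    obtain ⟨v, -, huv⟩ := mem_language_singleton_mul.1 hwb
    exact (List.cons_eq_cons.1 huv).1.symm
  · rintro w rfl hw
    obtain ⟨a, -, hw⟩ := mem_language_sum.1 hw
    obtain ⟨u, -, hu⟩ := mem_language_singleton_mul.1 hw
    exact List.cons_ne_nil a u hu

lemma lengthGF_risingTails_add (s k a : ℕ) : lengthGF (risingTails s (k + a) a) =
    lengthGF (risingTails s k 0) * lengthGF (avoidingWords 0 a) := by
  rw [risingTails_eq_map_mul, lengthGF_mul ((finitePerLength_risingTails s k 0).map _)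
    (finitePerLength_avoidingWords 0 a) (isUnambiguousMul_map_add s k a),
    lengthGF_map (add_left_injective a)]

lemma lengthGF_avoidingTails (s k a : ℕ) : lengthGF (avoidingTails s (k + 1 + a) a) =
    lengthGF (avoidingWords 0 (a + 1)) +
      lengthGF (risingTails s (k + 1) 0) * lengthGF (avoidingWords 0 a) := by
  have hfin := finitePerLength_avoidingTails s (k + 1 + a) a
  rw [avoidingTails_eq_add_risingTails (by lia)] at hfin ⊢
  rw [lengthGF_add hfin, lengthGF_risingTails_add]
  rintro w hw ⟨-, b, hb, hab⟩
  exact (growthBounded_zero.1 hw.2 b hb).not_ge hab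

lemma lengthGF_avoidingWords_succ (s k : ℕ) : lengthGF (avoidingWords s (k + 1)) =
    1 + X * ∑ ij ∈ antidiagonal k, (lengthGF (avoidingWords 0 (ij.1 + 1)) +
      lengthGF (risingTails s (ij.2 + s + 1) 0) * lengthGF (avoidingWords 0 ij.1)) := by
  rw [lengthGF_avoidingWords, Finset.Nat.sum_antidiagonal_eq_sum_range_succ_mk]
  congr! 3 with a ha
  have hak : a ≤ k := Finset.mem_range_succ_iff.1 ha
  rw [show k + 1 + s = k - a + s + 1 + a by lia, lengthGF_avoidingTails]

lemma lengthGF_risingTails_zero (s k : ℕ) : lengthGF (risingTails s (k + 1) 0) =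
    lengthGF (avoidingWords s k) - 1 + X * lengthGF (risingTails s (k + 1 + s) 0) := by
  have hfin := finitePerLength_risingTails s (k + 1) 0
  rw [risingTails_zero_eq_add] at hfin ⊢
  rw [lengthGF_add hfin, lengthGF_singleton_mul (finitePerLength_risingTails _ _ _),
    lengthGF_map (add_left_injective 1), lengthGF_sub (finitePerLength_avoidingWords s k),
    lengthGF_one, add_comm]
  · rintro w rfl
    exact nil_mem_avoidingWords
  · rintro w hw ⟨v, -, rfl⟩
    obtain ⟨u, -, hu⟩ := mem_language_singleton_mul.1 hw
    have : 0 ∈ v.map (· + 1) := hu ▸ List.mem_cons_self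
    simp at this

lemma one_sub_X_ne_zero : (1 - X : ℚ⟦X⟧) ≠ 0 :=
  fun h ↦ by simpa using congrArg constantCoeff h

lemma one_sub_X_mul_lengthGF_avoidingWords_one : (1 - X) * lengthGF (avoidingWords 1 1) =
    1 + X * (1 - X) * lengthGF (risingTails 1 2 0) := by
  have hword₀ := lengthGF_avoidingWords_succ 0 0
  have hword₁ := lengthGF_avoidingWords_succ 1 0
  have hrise := lengthGF_risingTails_zero 0 0
  simp only [Finset.Nat.antidiagonal_zero, Finset.sum_singleton, lengthGF_avoidingWords_zero,
    zero_add, add_zero, one_add_one_eq_two] at hword₀ hword₁ hrise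
  have hrise_eq_zero : lengthGF (risingTails 0 1 0) = 0 :=
    (mul_eq_zero.1 (by linear_combination hrise)).resolve_left one_sub_X_ne_zero
  linear_combination (1 - X) * hword₁ + X * hword₀ + X * X * hrise_eq_zero

lemma card_inversionSequences (n : ℕ) : Nat.card {σ : Fin n → ℕ //
    (∀ i, σ i ≤ i.val) ∧ ¬ Contains010 σ ∧ ¬ Contains102 σ} =
      (wordsOfLength (avoidingWords 1 1) n).ncard := by
  have ofFn_mem (σ : Fin n → ℕ) : List.ofFn σ ∈ avoidingWords 1 1 ↔
      (∀ i, σ i ≤ i.val) ∧ ¬ Contains010 σ ∧ ¬ Contains102 σ := by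
    simp only [mem_avoidingWords, triplewise_isAdmissible_ofFn, growthBounded_ofFn, one_mul,
      Nat.lt_one_add_iff]
    exact and_comm
  have himage : wordsOfLength (avoidingWords 1 1) n = List.ofFn '' {σ : Fin n → ℕ |
      (∀ i, σ i ≤ i.val) ∧ ¬ Contains010 σ ∧ ¬ Contains102 σ} := by
    ext w
    constructor
    · rintro ⟨hw, rfl⟩
      exact ⟨w.get, (ofFn_mem _).1 (by rwa [List.ofFn_get]), List.ofFn_get w⟩
    · rintro ⟨σ, hσ, rfl⟩
      exact ⟨(ofFn_mem σ).2 hσ, List.length_ofFn⟩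
  rw [himage, Set.ncard_image_of_injective _ List.ofFn_injective]
  rfl

lemma mk_card_inversionSequences :
    (mk fun n ↦ (Nat.card {σ : Fin n → ℕ //
      (∀ i, σ i ≤ i.val) ∧ ¬ Contains010 σ ∧ ¬ Contains102 σ} : ℚ)) =
        lengthGF (avoidingWords 1 1) := by
  simp only [card_inversionSequences, lengthGF]

end Recurrences

section Bivariate

/-- The generating function `∑ₖ xᵏ · lengthGF (avoidingWords s k)`: the outer variable marks the
bound on the letters, the inner one the length. -/
noncomputable def avoidingGF (s : ℕ) : ℚ⟦X⟧⟦X⟧ :=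
  mk fun k ↦ lengthGF (avoidingWords s k)

/-- The generating function `∑ₖ xᵏ · lengthGF (risingTails s (k + s + 1) 0)` of the rising tails
after a letter `0` bounded by `k + 1`, for which the bound on the next letter is `k + 1 + s`. -/
noncomputable def risingGF (s : ℕ) : ℚ⟦X⟧⟦X⟧ :=
  mk fun k ↦ lengthGF (risingTails s (k + s + 1) 0)

lemma avoidingGF_eq_X_mul_add_one (s : ℕ) :
    avoidingGF s = X * mk (fun k ↦ lengthGF (avoidingWords s (k + 1))) + 1 := by
  rw [eq_X_mul_shift_add_const (avoidingGF s)]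
  simp [avoidingGF, lengthGF_avoidingWords_zero]

lemma mk_lengthGF_avoidingWords_succ (s : ℕ) :
    mk (fun k ↦ lengthGF (avoidingWords s (k + 1))) = mk 1 +
      C X * (mk (fun k ↦ lengthGF (avoidingWords 0 (k + 1))) * mk 1 +
        avoidingGF 0 * risingGF s) := by
  ext1 k
  rw [coeff_mk, lengthGF_avoidingWords_succ, Finset.sum_add_distrib, map_add, coeff_C_mul, map_add,
    coeff_mul, coeff_mul]
  simp only [avoidingGF, risingGF, coeff_mk, Pi.one_apply, mul_one, mul_comm]

lemma avoidingGF_eq (s : ℕ) : avoidingGF s = 1 + X * mk 1 +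
    C X * ((avoidingGF 0 - 1) * mk 1 + X * (avoidingGF 0 * risingGF s)) := by
  linear_combination avoidingGF_eq_X_mul_add_one s + X * mk_lengthGF_avoidingWords_succ s -
    C X * mk 1 * avoidingGF_eq_X_mul_add_one 0

lemma risingGF_zero : risingGF 0 = avoidingGF 0 - mk 1 + C X * risingGF 0 := by
  ext1 k
  simp only [risingGF, avoidingGF, map_add, map_sub, coeff_C_mul, coeff_mk, Pi.one_apply]
  exact lengthGF_risingTails_zero 0 k

lemma risingGF_one : X * risingGF 1 + C (X * lengthGF (risingTails 1 2 0)) =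
    avoidingGF 1 - mk 1 + C X * risingGF 1 := by
  ext1 k
  simp only [risingGF, avoidingGF, map_add, map_sub, coeff_C_mul, coeff_mk, Pi.one_apply]
  rcases k with - | k
  · rw [coeff_zero_X_mul, coeff_zero_C, lengthGF_avoidingWords_zero, sub_self]
  · rw [coeff_succ_X_mul, coeff_C, if_neg k.succ_ne_zero, add_zero, coeff_mk]
    exact lengthGF_risingTails_zero 1 (k + 1)

lemma kernel_mul_risingGF_one : (X - C X - C X * X * avoidingGF 0) * risingGF 1 =
    C X * ((avoidingGF 0 - 1) * mk 1 - C (lengthGF (risingTails 1 2 0))) := by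
  have geom : (mk 1 : ℚ⟦X⟧⟦X⟧) * (1 - X) = 1 := mk_one_mul_one_sub_eq_one _
  have h := risingGF_one
  rw [map_mul] at h
  linear_combination h + avoidingGF_eq 1 - geom

lemma avoidingGF_zero_eq : (1 - X) * (1 - C X) * (avoidingGF 0 - 1) =
    X * (1 - C X) + C X * (1 - C X) * (avoidingGF 0 - 1) +
      X * C X * avoidingGF 0 * ((1 - X) * avoidingGF 0 - 1) := by
  have geom : (mk 1 : ℚ⟦X⟧⟦X⟧) * (1 - X) = 1 := mk_one_mul_one_sub_eq_one _
  linear_combination (1 - X) * (1 - C X) * avoidingGF_eq 0 +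
    (1 - X) * C X * X * avoidingGF 0 * risingGF_zero +
    (X * (1 - C X) + C X * (1 - C X) * (avoidingGF 0 - 1) - X * C X * avoidingGF 0) * geom

end Bivariate

section KernelMethod

open IsLocalRing

/-- By Weierstrass preparation `K` is a unit times a linear polynomial `X - r`, and `ε` is the
evaluation at `r`. -/
lemma exists_ringHom_apply_eq_zero {A : Type*} [CommRing A] [IsLocalRing A]
    [IsAdicComplete (maximalIdeal A) A] {K : A⟦X⟧}
    (h₀ : constantCoeff K ∈ maximalIdeal A) (h₁ : IsUnit (coeff 1 K)) :
    ∃ ε : A⟦X⟧ →+* A, (∀ a, ε (C a) = a) ∧ ε K = 0 := by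
  have coeff_one_ne : coeff 1 (K.map (residue A)) ≠ 0 := by
    simpa only [coeff_map] using (h₁.map (residue A)).ne_zero
  have map_ne_zero : K.map (residue A) ≠ 0 := fun h ↦ coeff_one_ne (by rw [h, map_zero])
  have order_eq : (K.map (residue A)).order = 1 := by
    refine order_eq_nat.2 ⟨coeff_one_ne, fun i hi ↦ ?_⟩
    rwa [Nat.lt_one_iff.1 hi, coeff_map, residue_eq_zero_iff, coeff_zero_eq_constantCoeff_apply]
  obtain ⟨f, h, H⟩ := exists_isWeierstrassFactorization map_ne_zero
  have natDegree_eq : f.natDegree = 1 := by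
    rw [H.natDegree_eq_toNat_order_map, order_eq, ENat.toNat_one]
  have root : Polynomial.aeval (-f.coeff 0) f = 0 := by
    rw [H.isDistinguishedAt.monic.eq_X_add_C natDegree_eq]
    simp
  let atRoot : (Polynomial A ⧸ Ideal.span {f}) →ₐ[A] A :=
    Ideal.Quotient.liftₐ _ (Polynomial.aeval (-f.coeff 0)) <| by
      intro g hg
      obtain ⟨r, rfl⟩ := Ideal.mem_span_singleton.1 hg
      rw [map_mul, root, zero_mul]
  let ε := (atRoot.comp H.algEquivQuotient.symm.toAlgHom).comp (Ideal.Quotient.mkₐ A _)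
  exact ⟨ε, ε.commutes, by simp [ε]⟩

lemma exists_ringHom_kernel_eq_zero :
    ∃ ε : ℚ⟦X⟧⟦X⟧ →+* ℚ⟦X⟧, (∀ a, ε (C a) = a) ∧ ε (X - C X - C X * X * avoidingGF 0) = 0 := by
  have : IsAdicComplete (maximalIdeal ℚ⟦X⟧) ℚ⟦X⟧ := by
    rw [maximalIdeal_eq_span_X]
    infer_instance
  refine exists_ringHom_apply_eq_zero ?_ ?_
  · rw [maximalIdeal_eq_span_X]
    simp
  · rw [isUnit_iff_constantCoeff]
    have : coeff 1 (X * avoidingGF 0) = 1 := by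
      rw [← zero_add 1, coeff_succ_X_mul]
      simp [avoidingGF, lengthGF_avoidingWords_zero]
    simp [mul_assoc, this]

/-- The series `u` is the root of the kernel in the outer variable. -/
lemma exists_mul_lengthGF_risingTails_eq :
    ∃ u : ℚ⟦X⟧, ((1 - u) ^ 2 - X * (1 - X)) * lengthGF (risingTails 1 2 0) = u ∧
      u * (1 + X * lengthGF (risingTails 1 2 0)) =
        X * (1 + (1 - X + X ^ 2) * lengthGF (risingTails 1 2 0)) := by
  obtain ⟨ε, ε_C, hε⟩ := exists_ringHom_kernel_eq_zero
  have hgeom := congrArg ε (mk_one_mul_one_sub_eq_one ℚ⟦X⟧)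
  have hone := congrArg ε kernel_mul_risingGF_one
  have hzero := congrArg ε avoidingGF_zero_eq
  rw [map_mul, hε, zero_mul] at hone
  simp only [map_mul, map_sub, map_add, map_one, ε_C] at hε hgeom hone hzero
  generalize ε X = u at *
  generalize ε (avoidingGF 0) = b at *
  generalize ε (mk 1) = e at *
  generalize lengthGF (risingTails 1 2 0) = y at *
  have mul_e : (b - 1) * e = y :=
    sub_eq_zero.1 ((mul_eq_zero.1 hone.symm).resolve_left X_ne_zero)
  have hb : b - 1 = (1 - u) * y := by
    linear_combination (1 - u) * mul_e - (b - 1) * hgeom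
  have b_rational : ((1 - u) ^ 2 - X * (1 - X)) * b = 1 - u - X * (1 - X) := by
    linear_combination hzero - ((1 - u) * b - 1) * hε
  have y_rational : ((1 - u) ^ 2 - X * (1 - X)) * y = u := by
    linear_combination e * b_rational - e * ((1 - u) ^ 2 - X * (1 - X)) * hb +
      (u - ((1 - u) ^ 2 - X * (1 - X)) * y) * hgeom
  exact ⟨u, y_rational, by linear_combination hε + X * u * hb - X * y_rational⟩

end KernelMethod

section Elimination

lemma cubic_of_mul_eq {R : Type*} [CommRing R] {t y u : R}
    (hy : ((1 - u) ^ 2 - t * (1 - t)) * y = u)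
    (hu : u * (1 + t * y) = t * (1 + (1 - t + t ^ 2) * y)) :
    (1 - t) ^ 2 * y * (1 + t ^ 2 * y) ^ 2 - t * (1 - t) * y * (1 + t * y) ^ 2 =
      t * (1 + t * y) * (1 + (1 - t + t ^ 2) * y) := by
  have one_sub : (1 - u) * (1 + t * y) = (1 - t) * (1 + t ^ 2 * y) := by
    linear_combination -hu
  linear_combination (1 + t * y) ^ 2 * hy + (1 + t * y) * hu -
    y * ((1 - u) * (1 + t * y) + (1 - t) * (1 + t ^ 2 * y)) * one_sub

lemma cubic_of_one_sub_mul_eq {R : Type*} [CommRing R] [IsDomain R] {t y F : R} (ht : 1 - t ≠ 0)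
    (hy : (1 - t) ^ 2 * y * (1 + t ^ 2 * y) ^ 2 - t * (1 - t) * y * (1 + t * y) ^ 2 =
      t * (1 + t * y) * (1 + (1 - t + t ^ 2) * y))
    (hF : (1 - t) * F = 1 + t * (1 - t) * y) :
    (t ^ 5 - 3 * t ^ 4 + 4 * t ^ 3 - 3 * t ^ 2 + t) * F ^ 3
      + (4 * t ^ 4 - 8 * t ^ 3 + 6 * t ^ 2 - 2 * t) * F ^ 2
      + (-t ^ 4 + 8 * t ^ 3 - 11 * t ^ 2 + 6 * t - 1) * F
      - 2 * t ^ 3 + 5 * t ^ 2 - 4 * t + 1 = 0 := by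
  refine (mul_eq_zero.1 ?_).resolve_left (pow_ne_zero 3 ht)
  linear_combination -t * (1 - t) ^ 4 * hy +
    ((t ^ 5 - 3 * t ^ 4 + 4 * t ^ 3 - 3 * t ^ 2 + t) * (((1 - t) * F) ^ 2 +
        (1 - t) * F * (1 + t * (1 - t) * y) + (1 + t * (1 - t) * y) ^ 2) +
      (4 * t ^ 4 - 8 * t ^ 3 + 6 * t ^ 2 - 2 * t) * (1 - t) *
        ((1 - t) * F + (1 + t * (1 - t) * y)) +
      (-t ^ 4 + 8 * t ^ 3 - 11 * t ^ 2 + 6 * t - 1) * (1 - t) ^ 2) * hF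

end Elimination

open PowerSeries in
/-- The ordinary generating function `F` of inversion sequences avoiding 010 and
102 satisfies the cubic equation
`(t^5 - 3t^4 + 4t^3 - 3t^2 + t) F^3 + (4t^4 - 8t^3 + 6t^2 - 2t) F^2
  + (-t^4 + 8t^3 - 11t^2 + 6t - 1) F - 2t^3 + 5t^2 - 4t + 1 = 0`. -/
theorem gf_I_010_102 :
    letI F : PowerSeries ℚ := PowerSeries.mk fun n =>
      (Nat.card {σ : Fin n → ℕ //
        (∀ i, σ i ≤ i.val) ∧ ¬ Contains010 σ ∧ ¬ Contains102 σ} : ℚ)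
    (X ^ 5 - 3 * X ^ 4 + 4 * X ^ 3 - 3 * X ^ 2 + X) * F ^ 3
      + (4 * X ^ 4 - 8 * X ^ 3 + 6 * X ^ 2 - 2 * X) * F ^ 2
      + (-X ^ 4 + 8 * X ^ 3 - 11 * X ^ 2 + 6 * X - 1) * F
      - 2 * X ^ 3 + 5 * X ^ 2 - 4 * X + 1 = 0 := by
  obtain ⟨u, hy, hu⟩ := exists_mul_lengthGF_risingTails_eq
  rw [mk_card_inversionSequences]
  exact cubic_of_one_sub_mul_eq one_sub_X_ne_zero (cubic_of_mul_eq hy hu)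
    one_sub_X_mul_lengthGF_avoidingWords_one
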